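/- (Error bound of value iteration with the Boltzmann softmax operator, second part) Given a finite Markov decision process, let R = max_{s,a} |r(s,a)|, let V* satisfy T_m V* = V*, fix β > 0, let V₀ : S → ℝ be arbitrary, and define V_{t+1} = T_β V_t. Then limsup_{t→∞} ‖V_t − V*‖∞ ≤ 2R/(1−γ)². -/

import Mathlib

/-!
Both the Boltzmann average and the maximum of a finite family bounded by `M` in absolute value are
bounded by `M`, so either operator maps a value function bounded by `M` to one bounded by
`R + γ * M` (`abs_Qval_le`, `abs_boltz_le`, `abs_fmax_le`). Hence the fixed point satisfies
`‖V*‖ ≤ R / (1 - γ)`, and by induction `‖V_t‖ ≤ R / (1 - γ) + γ ^ t * ‖V₀‖`. The triangle inequality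
gives `limsup ‖V_t - V*‖ ≤ 2 * R / (1 - γ)`, which is at most `2 * R / (1 - γ) ^ 2` because
`0 < 1 - γ ≤ 1`. The comparison of the Boltzmann operator with the maximum is not needed.
-/

noncomputable def boltz {ι : Type*} [Fintype ι] (β : ℝ) (x : ι → ℝ) : ℝ :=
  (∑ i, Real.exp (β * x i) * x i) / ∑ i, Real.exp (β * x i)

noncomputable def fmax {ι : Type*} [Fintype ι] [Nonempty ι] (x : ι → ℝ) : ℝ :=
  Finset.univ.sup' Finset.univ_nonempty x

noncomputable def fmin {ι : Type*} [Fintype ι] [Nonempty ι] (x : ι → ℝ) : ℝ :=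
  Finset.univ.inf' Finset.univ_nonempty x

noncomputable def Qval {S A : Type*} [Fintype S] (p : S → A → S → ℝ) (r : S → A → ℝ)
    (γ : ℝ) (V : S → ℝ) (s : S) (a : A) : ℝ :=
  r s a + γ * ∑ s', p s a s' * V s'

noncomputable def Tm {S A : Type*} [Fintype S] [Fintype A] [Nonempty A]
    (p : S → A → S → ℝ) (r : S → A → ℝ) (γ : ℝ) (V : S → ℝ) (s : S) : ℝ :=
  fmax (Qval p r γ V s)

noncomputable def Tb {S A : Type*} [Fintype S] [Fintype A]
    (p : S → A → S → ℝ) (r : S → A → ℝ) (γ : ℝ) (β : ℝ) (V : S → ℝ) (s : S) : ℝ :=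
  boltz β (Qval p r γ V s)

noncomputable def supNorm {S : Type*} [Fintype S] [Nonempty S] (V : S → ℝ) : ℝ :=
  fmax (fun s => |V s|)

open Filter

theorem le_fmax {ι : Type*} [Fintype ι] [Nonempty ι] (x : ι → ℝ) (i : ι) : x i ≤ fmax x :=
  Finset.le_sup' x (Finset.mem_univ i)

theorem fmax_le {ι : Type*} [Fintype ι] [Nonempty ι] {x : ι → ℝ} {M : ℝ} (h : ∀ i, x i ≤ M) :
    fmax x ≤ M :=
  Finset.sup'_le _ _ fun i _ => h i

theorem abs_fmax_le {ι : Type*} [Fintype ι] [Nonempty ι] {x : ι → ℝ} {M : ℝ}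
    (h : ∀ i, |x i| ≤ M) : |fmax x| ≤ M := by
  obtain ⟨i⟩ := ‹Nonempty ι›
  exact abs_le.2 ⟨(abs_le.1 (h i)).1.trans (le_fmax x i), fmax_le fun j => (abs_le.1 (h j)).2⟩

theorem abs_boltz_le {ι : Type*} [Fintype ι] [Nonempty ι] (β : ℝ) {x : ι → ℝ} {M : ℝ}
    (h : ∀ i, |x i| ≤ M) : |boltz β x| ≤ M := by
  have hpos : 0 < ∑ i, Real.exp (β * x i) :=
    Finset.sum_pos (fun i _ => Real.exp_pos _) Finset.univ_nonempty
  rw [boltz, abs_div, abs_of_pos hpos, div_le_iff₀ hpos, Finset.mul_sum]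
  refine (Finset.abs_sum_le_sum_abs _ _).trans (Finset.sum_le_sum fun i _ => ?_)
  rw [abs_mul, abs_of_pos (Real.exp_pos _), mul_comm]
  exact mul_le_mul_of_nonneg_right (h i) (Real.exp_pos _).le

theorem abs_Qval_le {S A : Type*} [Fintype S] {p : S → A → S → ℝ}
    (hp0 : ∀ s a s', 0 ≤ p s a s') (hp1 : ∀ s a, ∑ s', p s a s' = 1)
    {r : S → A → ℝ} {γ : ℝ} (hγ0 : 0 ≤ γ) {R : ℝ} (hr : ∀ s a, |r s a| ≤ R)
    {V : S → ℝ} {M : ℝ} (hV : ∀ s, |V s| ≤ M) (s : S) (a : A) :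
    |Qval p r γ V s a| ≤ R + γ * M := by
  have hsum : |∑ s', p s a s' * V s'| ≤ M := by
    calc |∑ s', p s a s' * V s'| ≤ ∑ s', |p s a s' * V s'| := Finset.abs_sum_le_sum_abs _ _
      _ ≤ ∑ s', p s a s' * M := Finset.sum_le_sum fun s' _ => by
          rw [abs_mul, abs_of_nonneg (hp0 s a s')]
          exact mul_le_mul_of_nonneg_left (hV s') (hp0 s a s')
      _ = M := by rw [← Finset.sum_mul, hp1, one_mul]
  refine (abs_add_le _ _).trans (add_le_add (hr s a) ?_)
  rw [abs_mul, abs_of_nonneg hγ0]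
  exact mul_le_mul_of_nonneg_left hsum hγ0

theorem fixed_boltz_vi_error_bound_reward {S A : Type*} [Fintype S] [Fintype A] [Nonempty S] [Nonempty A]
    (p : S → A → S → ℝ) (hp0 : ∀ s a s', 0 ≤ p s a s') (hp1 : ∀ s a, ∑ s', p s a s' = 1)
    (r : S → A → ℝ) (γ : ℝ) (hγ0 : 0 ≤ γ) (hγ1 : γ < 1)
    (R : ℝ) (hR : R = fmax (fun sa : S × A => |r sa.1 sa.2|))
    (Vstar : S → ℝ) (hVstar : Tm p r γ Vstar = Vstar)
    (β : ℝ) (hβ : 0 < β)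
    (V₀ : S → ℝ) (Vseq : ℕ → S → ℝ)
    (hV0 : Vseq 0 = V₀)
    (hVsucc : ∀ t, Vseq (t + 1) = Tb p r γ β (Vseq t)) :
    Filter.limsup (fun t => supNorm (fun s => Vseq t s - Vstar s)) atTop
      ≤ 2 * R / (1 - γ) ^ 2 := by
  have h1 : 0 < 1 - γ := by linarith
  have hr : ∀ s a, |r s a| ≤ R := fun s a => by
    rw [hR]
    exact le_fmax (fun sa : S × A => |r sa.1 sa.2|) (s, a)
  have hR0 : 0 ≤ R := by
    obtain ⟨s⟩ := ‹Nonempty S›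
    obtain ⟨a⟩ := ‹Nonempty A›
    exact (abs_nonneg _).trans (hr s a)
  have hstar : ∀ s, |Vstar s| ≤ R / (1 - γ) := by
    have hle : ∀ s, |Vstar s| ≤ supNorm Vstar := le_fmax (fun s => |Vstar s|)
    have hself : supNorm Vstar ≤ R + γ * supNorm Vstar := fmax_le fun s => by
      rw [← congrFun hVstar s]
      exact abs_fmax_le fun a => abs_Qval_le hp0 hp1 hγ0 hr hle s a
    intro s
    rw [le_div_iff₀ h1]
    nlinarith [hle s]
  have hseq : ∀ t s, |Vseq t s| ≤ R / (1 - γ) + γ ^ t * supNorm V₀ := by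
    intro t
    induction t with
    | zero =>
      intro s
      have hs : |V₀ s| ≤ supNorm V₀ := le_fmax (fun s => |V₀ s|) s
      have : 0 ≤ R / (1 - γ) := by positivity
      rw [hV0, pow_zero]
      linarith
    | succ t ih =>
      intro s
      rw [hVsucc]
      refine (abs_boltz_le β fun a => abs_Qval_le hp0 hp1 hγ0 hr ih s a).trans (le_of_eq ?_)
      field_simp
      ring
  have hbound : ∀ t, supNorm (fun s => Vseq t s - Vstar s)
      ≤ 2 * R / (1 - γ) + γ ^ t * supNorm V₀ := fun t => fmax_le fun s => by
    have h2 : 2 * R / (1 - γ) = R / (1 - γ) + R / (1 - γ) := by ring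
    linarith [abs_sub (Vseq t s) (Vstar s), hseq t s, hstar s]
  have hlim : Tendsto (fun t : ℕ => 2 * R / (1 - γ) + γ ^ t * supNorm V₀) atTop
      (nhds (2 * R / (1 - γ))) := by
    simpa using ((tendsto_pow_atTop_nhds_zero_of_lt_one hγ0 hγ1).mul_const
      (supNorm V₀)).const_add (2 * R / (1 - γ))
  have hnonneg : ∀ t, 0 ≤ supNorm (fun s => Vseq t s - Vstar s) := fun t => by
    obtain ⟨s⟩ := ‹Nonempty S›
    exact (abs_nonneg _).trans (le_fmax (fun s => |Vseq t s - Vstar s|) s)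
  calc limsup (fun t => supNorm (fun s => Vseq t s - Vstar s)) atTop
      ≤ limsup (fun t : ℕ => 2 * R / (1 - γ) + γ ^ t * supNorm V₀) atTop :=
        -- In `ℝ` monotonicity of `limsup` requires boundedness; nonnegativity gives the lower side.
        limsup_le_limsup (Eventually.of_forall hbound)
          (isBoundedUnder_of ⟨0, hnonneg⟩ : IsBoundedUnder (· ≥ ·) atTop _).isCoboundedUnder_le
          hlim.isBoundedUnder_le
    _ = 2 * R / (1 - γ) := hlim.limsup_eq
    _ ≤ 2 * R / (1 - γ) ^ 2 := by
        refine div_le_div_of_nonneg_left (by positivity) (by positivity) ?_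
        nlinarith
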